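/- arXiv:2408.02527 — 2 statements merged into one kernel-verified Lean document; each statement's English description precedes it below -/
import Mathlib

section
/- The digit-reversal map f has infinitely many points of period 2: the set {n : ℕ | f(f(n)) = n ∧ f(n) ≠ n} is infinite. -/
/-!
If `rev n = 9 * n` with `n > 0`, then `n` has period two: `rev n ≥ n` gives `f n = 10 * n`, and
since appending a zero does not change the reversal, `rev (10 * n) = 9 * n < 10 * n`, so
`f (10 * n) = 10 * n - 9 * n = n`. The numbers `1089, 10989, 109989, …`, that is
`1100 * 10 ^ k - 11`, all satisfy `rev n = 9 * n` (`rev_family`).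
-/

def rev (n : ℕ) : ℕ := Nat.ofDigits 10 ((Nat.digits 10 n).reverse)

def f (n : ℕ) : ℕ := if rev n < n then n - rev n else n + rev n

lemma rev_ten_mul (n : ℕ) (hn : 0 < n) : rev (10 * n) = rev n := by
  unfold rev
  have h := Nat.digits_add_two_add_one 8 (10 * n - 1)
  rw [Nat.sub_add_cancel (by omega)] at h
  norm_num at h
  rw [h]
  simp [Nat.ofDigits_append]

lemma period_two_of_rev (n : ℕ) (hn : 0 < n) (h : rev n = 9 * n) : f (f n) = n ∧ f n ≠ n := by
  have h1 : f n = 10 * n := by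
    unfold f
    rw [if_neg (by omega)]
    omega
  have h2 : f (10 * n) = n := by
    unfold f
    rw [rev_ten_mul n hn, if_pos (by omega)]
    omega
  rw [h1]
  exact ⟨h2, by omega⟩

lemma ofDigits_replicate_nine (k : ℕ) :
    Nat.ofDigits 10 (List.replicate k 9) + 1 = 10 ^ k := by
  induction k with
  | zero => simp
  | succ k ih =>
    rw [List.replicate_succ, Nat.ofDigits_cons, pow_succ, ← ih]
    ring

/-- The decimal expansion is `10 9…9 89` with `k` nines in the middle block; its reversal
`98 9…9 01` is nine times as large. -/
lemma rev_family (k : ℕ) : rev (1100 * 10 ^ k - 11) = 9 * (1100 * 10 ^ k - 11) := by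
  have ha := ofDigits_replicate_nine k
  -- digits are listed from the least significant one
  have hd : Nat.digits 10 (1100 * 10 ^ k - 11) = [9, 8] ++ List.replicate k 9 ++ [0, 1] := by
    have hv : 1100 * 10 ^ k - 11 = Nat.ofDigits 10 ([9, 8] ++ List.replicate k 9 ++ [0, 1]) := by
      simp only [Nat.ofDigits_append, List.length_append, List.length_replicate, pow_add, ← ha]
      norm_num [Nat.ofDigits_cons]
      omega
    rw [hv]
    apply Nat.digits_ofDigits 10 (by norm_num)
    · intro d hd
      have hd' : d ∈ [9, 8] ∨ (k ≠ 0 ∧ d = 9) ∨ d ∈ [0, 1] := by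
        simpa [or_assoc] using hd
      simp at hd'
      omega
    · simp
  unfold rev
  rw [hd]
  simp only [List.reverse_append, List.reverse_replicate, Nat.ofDigits_append,
    List.length_replicate, ← ha]
  norm_num [Nat.ofDigits_cons]
  omega

theorem infinitely_many_period_two_points :
    {n : ℕ | f (f n) = n ∧ f n ≠ n}.Infinite := by
  have hpos : ∀ k : ℕ, 0 < 10 ^ k := fun k => by positivity
  refine Set.infinite_of_injective_forall_mem (f := fun k : ℕ => 1100 * 10 ^ k - 11) ?_ ?_
  · intro i j hij
    have hi := hpos i
    have hj := hpos j
    have h : 10 ^ i = 10 ^ j := by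
      simp only at hij
      omega
    exact Nat.pow_right_injective (le_refl 2 |>.trans (by norm_num)) h
  · intro k
    have hk := hpos k
    exact period_two_of_rev _ (by omega) (rev_family k)
end

section
/- The trajectory of the digit-reversal map f starting from 10057 diverges to infinity: for every M : ℕ there exists k such that f^[k](10057) > M. -/
open List in
/-- The digits, least significant first, of the number written `10 9…9 89 0…0` with `a` nines
between `10` and `89` and `b` trailing zeros. -/
def digitsA (a b : ℕ) : List ℕ := replicate b 0 ++ ([9, 8] ++ (replicate a 9 ++ [0, 1]))

open List in
/-- The digits, least significant first, of the number written `10 9…9 w 0…0 99` with `a` nines,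
`b` zeros, and a middle block `w` (given least significant digit first). -/
def digitsB (a b : ℕ) (w : List ℕ) : List ℕ :=
  [9, 9] ++ (replicate b 0 ++ (w ++ (replicate a 9 ++ [0, 1])))

lemma ofDigits_int (l : List ℕ) :
    Nat.ofDigits (10 : ℤ) l = ((Nat.ofDigits 10 l : ℕ) : ℤ) := by
  rw [Nat.coe_ofDigits]; rfl

lemma ofDigits_nines (n : ℕ) : Nat.ofDigits (10 : ℤ) (List.replicate n 9) = 10 ^ n - 1 := by
  induction n with
  | zero => simp [Nat.ofDigits]
  | succ n ih => rw [List.replicate_succ, Nat.ofDigits, ih]; push_cast; ring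

lemma ofDigits_zeros (n : ℕ) : Nat.ofDigits (10 : ℤ) (List.replicate n 0) = 0 := by
  induction n with
  | zero => simp [Nat.ofDigits]
  | succ n ih => rw [List.replicate_succ, Nat.ofDigits, ih]; simp

lemma ofDigits_append_int (l₁ l₂ : List ℕ) :
    Nat.ofDigits (10 : ℤ) (l₁ ++ l₂) =
      Nat.ofDigits (10 : ℤ) l₁ + 10 ^ l₁.length * Nat.ofDigits (10 : ℤ) l₂ := by
  simp only [ofDigits_int, Nat.ofDigits_append]
  push_cast
  rfl

lemma rev_ofDigits (l : List ℕ) (h₁ : ∀ d ∈ l, d < 10) (h₂ : ∀ h : l ≠ [], l.getLast h ≠ 0) :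
    rev (Nat.ofDigits 10 l) = Nat.ofDigits 10 l.reverse := by
  rw [rev, Nat.digits_ofDigits 10 (by norm_num) l h₁ h₂]

lemma f_of_sub (l l' : List ℕ) (h₁ : ∀ d ∈ l, d < 10) (h₂ : ∀ h : l ≠ [], l.getLast h ≠ 0)
    (hpos : 0 < Nat.ofDigits (10 : ℤ) l')
    (h : Nat.ofDigits (10 : ℤ) l =
      Nat.ofDigits (10 : ℤ) l.reverse + Nat.ofDigits (10 : ℤ) l') :
    f (Nat.ofDigits 10 l) = Nat.ofDigits 10 l' := by
  simp only [ofDigits_int] at hpos h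
  rw [f, rev_ofDigits l h₁ h₂, if_pos (by omega)]
  omega

lemma f_of_add (l l' : List ℕ) (h₁ : ∀ d ∈ l, d < 10) (h₂ : ∀ h : l ≠ [], l.getLast h ≠ 0)
    (hle : Nat.ofDigits (10 : ℤ) l ≤ Nat.ofDigits (10 : ℤ) l.reverse)
    (h : Nat.ofDigits (10 : ℤ) l + Nat.ofDigits (10 : ℤ) l.reverse =
      Nat.ofDigits (10 : ℤ) l') :
    f (Nat.ofDigits 10 l) = Nat.ofDigits 10 l' := by
  simp only [ofDigits_int] at hle h
  rw [f, rev_ofDigits l h₁ h₂, if_neg (by omega)]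
  omega

lemma digitsA_lt (a b : ℕ) : ∀ d ∈ digitsA a b, d < 10 := by
  intro d hd
  simp [digitsA] at hd
  omega

lemma digitsB_lt (a b : ℕ) (w : List ℕ) (hw : ∀ d ∈ w, d < 10) :
    ∀ d ∈ digitsB a b w, d < 10 := by
  intro d hd
  by_cases hdw : d ∈ w
  · exact hw d hdw
  · simp [digitsB, hdw] at hd
    omega

lemma digitsA_getLast (a b : ℕ) : ∀ h : digitsA a b ≠ [], (digitsA a b).getLast h ≠ 0 := by
  simp [digitsA]

lemma digitsB_getLast (a b : ℕ) (w : List ℕ) :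
    ∀ h : digitsB a b w ≠ [], (digitsB a b w).getLast h ≠ 0 := by
  simp [digitsB]

lemma val_A (a b : ℕ) :
    Nat.ofDigits (10 : ℤ) (digitsA a b) = 11 * (100 * 10 ^ a - 1) * 10 ^ b := by
  simp only [digitsA, ofDigits_append_int, ofDigits_nines, ofDigits_zeros, List.length_replicate]
  simp [Nat.ofDigits]
  ring

lemma val_A_reverse (a b : ℕ) :
    Nat.ofDigits (10 : ℤ) (digitsA a b).reverse = 99 * (100 * 10 ^ a - 1) := by
  simp only [digitsA, List.reverse_append, List.reverse_replicate, ofDigits_append_int,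
    ofDigits_nines, ofDigits_zeros]
  simp [Nat.ofDigits]
  ring

lemma val_B (a b : ℕ) (w : List ℕ) :
    Nat.ofDigits (10 : ℤ) (digitsB a b w) = 99 + 100 * 10 ^ b *
      (Nat.ofDigits (10 : ℤ) w + 10 ^ w.length * (11 * 10 ^ a - 1)) := by
  simp only [digitsB, ofDigits_append_int, ofDigits_nines, ofDigits_zeros, List.length_replicate]
  simp [Nat.ofDigits]
  ring

lemma val_B_reverse (a b : ℕ) (w : List ℕ) :
    Nat.ofDigits (10 : ℤ) (digitsB a b w).reverse = 1 + 100 * (10 ^ a - 1 + 10 ^ a *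
      (Nat.ofDigits (10 : ℤ) w.reverse + 10 ^ w.length * (10 ^ b * 99))) := by
  simp only [digitsB, List.reverse_append, List.reverse_replicate, ofDigits_append_int,
    ofDigits_nines, ofDigits_zeros]
  simp [Nat.ofDigits]
  ring

/-- Two applications of `f` carry `A a b` to `A a' b'` through the intermediate number
whose digits are `digitsB p q w`, as soon as the values match and that number is at most its
reversal. -/
lemma two_steps (a b a' b' p q : ℕ) (w : List ℕ) (hw : ∀ d ∈ w, d < 10)
    (hsub : 11 * (100 * 10 ^ a - 1) * 10 ^ b = 99 * (100 * 10 ^ a - 1) +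
      Nat.ofDigits (10 : ℤ) (digitsB p q w))
    (hle : Nat.ofDigits (10 : ℤ) (digitsB p q w) ≤ Nat.ofDigits (10 : ℤ) (digitsB p q w).reverse)
    (hadd : Nat.ofDigits (10 : ℤ) (digitsB p q w) + Nat.ofDigits (10 : ℤ) (digitsB p q w).reverse =
      11 * (100 * 10 ^ a' - 1) * 10 ^ b') :
    f^[2] (Nat.ofDigits 10 (digitsA a b)) = Nat.ofDigits 10 (digitsA a' b') := by
  have hpos : 0 < Nat.ofDigits (10 : ℤ) (digitsB p q w) := by
    have h0 : (0 : ℤ) ≤ Nat.ofDigits (10 : ℤ) w := by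
      rw [ofDigits_int]; positivity
    have h1 : (1 : ℤ) ≤ 10 ^ p := one_le_pow₀ (by norm_num)
    have h2 : (0 : ℤ) ≤ 11 * 10 ^ p - 1 := by linarith
    rw [val_B]
    positivity
  rw [show f^[2] = f ∘ f from rfl, Function.comp_apply,
    f_of_sub _ (digitsB p q w) (digitsA_lt a b) (digitsA_getLast a b) hpos
      (by rw [val_A, val_A_reverse, hsub]),
    f_of_add _ (digitsA a' b') (digitsB_lt p q w hw) (digitsB_getLast p q w) hle
      (by rw [hadd, val_A])]

lemma phase1 (n : ℕ) : f^[2] (Nat.ofDigits 10 (digitsA (n + 4) (n + 2))) =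
    Nat.ofDigits 10 (digitsA (n + 4) (n + 3)) := by
  have h1 : (1 : ℤ) ≤ 10 ^ n := one_le_pow₀ (by norm_num)
  apply two_steps _ _ _ _ n n [9, 8, 9, 9, 0, 0] (by decide) <;>
    simp only [val_B, val_B_reverse] <;> simp [Nat.ofDigits, pow_add]
  · ring
  · nlinarith
  · ring

lemma phase2 (n : ℕ) : f^[2] (Nat.ofDigits 10 (digitsA (n + 4) (n + 3))) =
    Nat.ofDigits 10 (digitsA (n + 4) (n + 4)) := by
  have h1 : (1 : ℤ) ≤ 10 ^ n := one_le_pow₀ (by norm_num)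
  apply two_steps _ _ _ _ (n + 1) (n + 1) [9, 8, 9, 0, 0] (by decide) <;>
    simp only [val_B, val_B_reverse] <;> simp [Nat.ofDigits, pow_add]
  · ring
  · nlinarith
  · ring

lemma phase3 (n : ℕ) : f^[2] (Nat.ofDigits 10 (digitsA (n + 4) (n + 4))) =
    Nat.ofDigits 10 (digitsA (n + 4) (n + 5)) := by
  have h1 : (1 : ℤ) ≤ 10 ^ n := one_le_pow₀ (by norm_num)
  apply two_steps _ _ _ _ (n + 2) (n + 2) [9, 8, 0, 0] (by decide) <;>
    simp only [val_B, val_B_reverse] <;> simp [Nat.ofDigits, pow_add]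
  · ring
  · nlinarith
  · ring

lemma phase4 (n : ℕ) : f^[2] (Nat.ofDigits 10 (digitsA (n + 4) (n + 5))) =
    Nat.ofDigits 10 (digitsA (n + 6) (n + 4)) := by
  have h1 : (1 : ℤ) ≤ 10 ^ n := one_le_pow₀ (by norm_num)
  apply two_steps _ _ _ _ (n + 2) (n + 3) [9, 9, 9, 8] (by decide) <;>
    simp only [val_B, val_B_reverse] <;> simp [Nat.ofDigits, pow_add]
  · ring
  · nlinarith
  · ring

lemma eight_steps (n : ℕ) : f^[8] (Nat.ofDigits 10 (digitsA (n + 4) (n + 2))) =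
    Nat.ofDigits 10 (digitsA (n + 6) (n + 4)) := by
  rw [show 8 = 2 + (2 + (2 + 2)) from rfl]
  simp only [Function.iterate_add_apply f 2 _, phase1, phase2, phase3, phase4]

lemma start : f^[19] 10057 = Nat.ofDigits 10 (digitsA 6 4) := by
  simp [f, rev, digitsA, Nat.ofDigits_cons, List.replicate]

lemma orbit_mem (j : ℕ) :
    f^[8 * j + 19] 10057 = Nat.ofDigits 10 (digitsA (2 * j + 6) (2 * j + 4)) := by
  induction j with
  | zero => exact start
  | succ j ih =>
    rw [show 8 * (j + 1) + 19 = 8 + (8 * j + 19) by ring, Function.iterate_add_apply, ih]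
    exact eight_steps (2 * j + 2)

theorem diverging_trajectory_10057 :
    ∀ M : ℕ, ∃ k : ℕ, f^[k] 10057 > M := by
  intro M
  refine ⟨8 * M + 19, ?_⟩
  rw [orbit_mem]
  have hv := val_A (2 * M + 6) (2 * M + 4)
  rw [ofDigits_int] at hv
  have h1 : (1 : ℤ) ≤ 10 ^ (2 * M + 6) := one_le_pow₀ (by norm_num)
  have h2 : ((2 * M + 4 : ℕ) : ℤ) < 10 ^ (2 * M + 4) := by
    exact_mod_cast Nat.lt_pow_self (by norm_num : 1 < 10)
  have h3 : (M : ℤ) < ((Nat.ofDigits 10 (digitsA (2 * M + 6) (2 * M + 4)) : ℕ) : ℤ) := by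
    rw [hv]
    push_cast at h2
    generalize (10 : ℤ) ^ (2 * M + 6) = x at *
    generalize (10 : ℤ) ^ (2 * M + 4) = y at *
    nlinarith [mul_nonneg (sub_nonneg.2 h1) (by linarith : (0 : ℤ) ≤ y)]
  exact_mod_cast h3
end
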